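/- There exists an absolute constant c > 0 such that the following holds. Let f : {0,1}^n → ℝ, let d ≥ 1, and let (J, z) be a random restriction where each j ∈ [n] is included in J independently with probability 1/d and z is uniform in {0,1}^{[n]∖J}. Then E_{J,z}[W_{=1}[f_{([n]∖J)→z}]] ≥ c·W_{≈d}[f]. -/

import Mathlib

open Finset

noncomputable section

/-- Expectation over the uniform distribution on `{0,1}^n`. -/
def hcExp (n : ℕ) (g : (Fin n → Bool) → ℝ) : ℝ :=
  (∑ x : Fin n → Bool, g x) / 2 ^ n

/-- Flip the `i`-th coordinate of `x`. -/
def hcFlip {n : ℕ} (x : Fin n → Bool) (i : Fin n) : Fin n → Bool :=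
  Function.update x i (!(x i))

/-- Sensitivity of `f` at `x`. -/
def sens {n : ℕ} (f : (Fin n → Bool) → Bool) (x : Fin n → Bool) : ℕ :=
  (Finset.univ.filter fun i => f (hcFlip x i) ≠ f x).card

/-- `f` with values in `{0,1} ⊆ ℝ`. -/
def toReal {n : ℕ} (f : (Fin n → Bool) → Bool) : (Fin n → Bool) → ℝ :=
  fun x => if f x then 1 else 0

/-- Variance of a Boolean function. -/
def hcVar (n : ℕ) (f : (Fin n → Bool) → Bool) : ℝ :=
  hcExp n (toReal f) - (hcExp n (toReal f)) ^ 2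

/-- Influence of coordinate `i`. -/
def influence (n : ℕ) (f : (Fin n → Bool) → Bool) (i : Fin n) : ℝ :=
  hcExp n (fun x => if f (hcFlip x i) = f x then 0 else 1)

/-- Fourier character. -/
def chi {n : ℕ} (S : Finset (Fin n)) (x : Fin n → Bool) : ℝ :=
  ∏ i ∈ S, (if x i then (-1 : ℝ) else 1)

/-- Fourier coefficient of `g` at `S`. -/
def fcoef (n : ℕ) (g : (Fin n → Bool) → ℝ) (S : Finset (Fin n)) : ℝ :=
  hcExp n (fun x => g x * chi S x)

/-- Derivative of `g` along coordinate `i`. -/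
def derivOn {n : ℕ} (g : (Fin n → Bool) → ℝ) (i : Fin n) (x : Fin n → Bool) : ℝ :=
  g (Function.update x i false) - g (Function.update x i true)

/-- Euclidean norm of the gradient of `g` at `x`. -/
def gradNorm2 {n : ℕ} (g : (Fin n → Bool) → ℝ) (x : Fin n → Bool) : ℝ :=
  Real.sqrt (∑ i, (derivOn g i x) ^ 2)

/-- `ℓ_p` norm of the gradient of `g` at `x`. -/
def gradNormP {n : ℕ} (p : ℝ) (g : (Fin n → Bool) → ℝ) (x : Fin n → Bool) : ℝ :=
  (∑ i, |derivOn g i x| ^ p) ^ (1 / p)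

/-- Fourier weight at exactly level `d`. -/
def wEq (n : ℕ) (g : (Fin n → Bool) → ℝ) (d : ℕ) : ℝ :=
  ∑ S ∈ Finset.univ.filter (fun S : Finset (Fin n) => S.card = d), (fcoef n g S) ^ 2

/-- Approximate level-`d` Fourier weight: levels in `[d, 2d)`. -/
def wApprox (n : ℕ) (g : (Fin n → Bool) → ℝ) (d : ℕ) : ℝ :=
  ∑ S ∈ Finset.univ.filter (fun S : Finset (Fin n) => d ≤ S.card ∧ S.card < 2 * d),
    (fcoef n g S) ^ 2

/-- Fourier weight at levels `≥ d`. -/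
def wGe (n : ℕ) (g : (Fin n → Bool) → ℝ) (d : ℕ) : ℝ :=
  ∑ S ∈ Finset.univ.filter (fun S : Finset (Fin n) => d ≤ S.card), (fcoef n g S) ^ 2


/-- The restriction of `f` in which the coordinates of `J` are alive and the
coordinates outside `J` are fixed according to `z`, viewed as a function on the
full cube (it depends only on the coordinates in `J`). -/
def restrictTo {n : ℕ} (f : (Fin n → Bool) → ℝ) (J : Finset (Fin n))
    (z : Fin n → Bool) : (Fin n → Bool) → ℝ :=
  fun y => f (fun i => if i ∈ J then y i else z i)

/-- Level-1 Fourier weight of the restriction `f_{([n]∖J) → z}` with alive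
coordinates `J`: since the restriction does not depend on coordinates outside
`J`, its degree-1 coefficients on the subcube `{0,1}^J` coincide with the
coefficients `f̂({j})`, `j ∈ J`, of `restrictTo f J z` on the full cube (all
other singleton coefficients vanish). -/
def wOneRestriction {n : ℕ} (f : (Fin n → Bool) → ℝ) (J : Finset (Fin n))
    (z : Fin n → Bool) : ℝ :=
  ∑ j ∈ J, (fcoef n (restrictTo f J z) {j}) ^ 2

/-! Substituting the Fourier expansion of `f` shows that the degree-`k` part of the restriction
with alive set `J` collects the characters `S` with `#(S ∩ J) = k`; the frozen parts `S \ J` of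
those with a common alive part `S ∩ J` are distinct, so averaging over `z` leaves the sum of their
squared coefficients. Averaging over a `p`-random `J`, the coefficient at `S` is therefore weighted
by `P[Bin(#S, p) = k]`, which for `k = 1`, `p = 1 / d` and `d ≤ #S < 2 * d` is at least `e⁻²`. -/

section Characters

variable {n : ℕ}

theorem hcExp_const_mul (a : ℝ) (g : (Fin n → Bool) → ℝ) :
    hcExp n (fun x => a * g x) = a * hcExp n g := by
  simp only [hcExp, ← mul_sum, mul_div_assoc]

theorem hcExp_sum {ι : Type*} (s : Finset ι) (g : ι → (Fin n → Bool) → ℝ) :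
    hcExp n (fun x => ∑ i ∈ s, g i x) = ∑ i ∈ s, hcExp n (g i) := by
  simp only [hcExp, ← sum_div]
  rw [sum_comm]

theorem hcExp_prod (h : Fin n → Bool → ℝ) :
    hcExp n (fun x => ∏ i, h i (x i)) = ∏ i, (h i true + h i false) / 2 := by
  simp [hcExp, prod_div_distrib, ← Fintype.prod_sum]

theorem chi_eq_prod_univ (S : Finset (Fin n)) (x : Fin n → Bool) :
    chi S x = ∏ i, if i ∈ S then (if x i then (-1 : ℝ) else 1) else 1 := by
  rw [prod_ite_mem, univ_inter, chi]

theorem chi_mul_chi (S T : Finset (Fin n)) (x : Fin n → Bool) :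
    chi S x * chi T x = chi (symmDiff S T) x := by
  simp only [chi_eq_prod_univ, ← prod_mul_distrib]
  refine prod_congr rfl fun i _ => ?_
  by_cases hS : i ∈ S <;> by_cases hT : i ∈ T <;> cases x i <;> simp [mem_symmDiff, hS, hT]

theorem hcExp_chi (S : Finset (Fin n)) : hcExp n (chi S) = if S = ∅ then 1 else 0 := by
  have factor (i : Fin n) : ((if i ∈ S then -1 else 1) + 1 : ℝ) / 2 = if i ∉ S then 1 else 0 := by
    by_cases hi : i ∈ S <;> simp [hi]
  calc hcExp n (chi S)
      = hcExp n fun x => ∏ i, if i ∈ S then (if x i then (-1 : ℝ) else 1) else 1 :=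
        congrArg (hcExp n) (funext (chi_eq_prod_univ S))
    _ = ∏ i, if i ∉ S then (1 : ℝ) else 0 := by
        rw [hcExp_prod fun i b => if i ∈ S then (if b then (-1 : ℝ) else 1) else 1]
        simp [factor]
    _ = if S = ∅ then 1 else 0 := by simp [zero_pow_eq]

theorem hcExp_chi_mul_chi (S T : Finset (Fin n)) :
    hcExp n (fun x => chi S x * chi T x) = if S = T then 1 else 0 := by
  simp only [chi_mul_chi, ← symmDiff_eq_bot (a := S)]
  exact hcExp_chi _

theorem hcExp_sum_chi_sq {ι : Type*} {s : Finset ι} {φ : ι → Finset (Fin n)}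
    (hφ : Set.InjOn φ s) (a : ι → ℝ) :
    hcExp n (fun x => (∑ i ∈ s, a i * chi (φ i) x) ^ 2) = ∑ i ∈ s, a i ^ 2 := by
  classical
  have orthogonal {i j : ι} (hi : i ∈ s) (hj : j ∈ s) :
      hcExp n (fun x => a i * chi (φ i) x * (a j * chi (φ j) x)) =
        if i = j then a i * a j else 0 := by
    simp only [mul_mul_mul_comm (a i), hcExp_const_mul, hcExp_chi_mul_chi, hφ.eq_iff hi hj,
      mul_ite, mul_one, mul_zero]
  simp only [sq, sum_mul_sum, hcExp_sum]
  refine sum_congr rfl fun i hi => ?_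
  rw [sum_congr rfl fun j hj => orthogonal hi hj, sum_ite_eq, if_pos hi]

theorem sum_chi_mul_chi (x y : Fin n → Bool) :
    ∑ S, chi S x * chi S y = if x = y then 2 ^ n else 0 := by
  have factor (i : Fin n) : (1 + (if x i then -1 else 1) * (if y i then -1 else 1) : ℝ) =
      if x i = y i then 2 else 0 := by
    cases x i <;> cases y i <;> norm_num
  simp only [chi, ← prod_mul_distrib, ← powerset_univ, ← prod_one_add, factor, prod_ite_zero]
  simp [funext_iff]

theorem sum_fcoef_mul_chi (f : (Fin n → Bool) → ℝ) (x : Fin n → Bool) :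
    ∑ S, fcoef n f S * chi S x = f x := by
  calc ∑ S, fcoef n f S * chi S x
      = hcExp n fun y => ∑ S, chi S x * (f y * chi S y) := by
        simp only [hcExp_sum, hcExp_const_mul, fcoef, mul_comm]
    _ = hcExp n fun y => f y * if x = y then 2 ^ n else 0 := by
        simp only [mul_left_comm (chi _ x), ← mul_sum, sum_chi_mul_chi]
    _ = f x := by simp [hcExp]

end Characters

section Restrictions

variable {n : ℕ}

theorem chi_piecewise (S J : Finset (Fin n)) (y z : Fin n → Bool) :
    chi S (J.piecewise y z) = chi (S ∩ J) y * chi (S \ J) z := by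
  simp only [chi, ← prod_piecewise]
  refine prod_congr rfl fun i _ => ?_
  by_cases hi : i ∈ J <;> simp [hi]

theorem fcoef_restrictTo (f : (Fin n → Bool) → ℝ) (J : Finset (Fin n)) (z : Fin n → Bool)
    (T : Finset (Fin n)) :
    fcoef n (restrictTo f J z) T = ∑ S with S ∩ J = T, fcoef n f S * chi (S \ J) z := by
  have expansion (y : Fin n → Bool) : restrictTo f J z y * chi T y =
      ∑ S, fcoef n f S * chi (S \ J) z * (chi (S ∩ J) y * chi T y) := by
    change f (J.piecewise y z) * chi T y = _
    rw [← sum_fcoef_mul_chi f, sum_mul]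
    refine sum_congr rfl fun S _ => ?_
    rw [chi_piecewise]
    ring
  simp only [fcoef, expansion]
  simp only [hcExp_sum, hcExp_const_mul, hcExp_chi_mul_chi, sum_filter, mul_ite, mul_one, mul_zero]

theorem hcExp_fcoef_restrictTo_sq (f : (Fin n → Bool) → ℝ) (J T : Finset (Fin n)) :
    hcExp n (fun z => fcoef n (restrictTo f J z) T ^ 2) =
      ∑ S with S ∩ J = T, fcoef n f S ^ 2 := by
  simp only [fcoef_restrictTo]
  refine hcExp_sum_chi_sq (fun S hS S' hS' hdiff => ?_) _
  have inter_eq : S ∩ J = S' ∩ J := by simp_all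
  rw [← sdiff_union_inter S J, hdiff, inter_eq, sdiff_union_inter]

theorem hcExp_wEq_restrictTo (f : (Fin n → Bool) → ℝ) (J : Finset (Fin n)) (k : ℕ) :
    hcExp n (fun z => wEq n (restrictTo f J z) k) = ∑ S with #(S ∩ J) = k, fcoef n f S ^ 2 := by
  simp only [wEq, hcExp_sum, hcExp_fcoef_restrictTo_sq]
  rw [sum_comm' (t' := {S | #(S ∩ J) = k}) (s' := fun S => {S ∩ J}) (by aesop)]
  simp only [sum_singleton]

theorem wOneRestriction_eq_wEq (f : (Fin n → Bool) → ℝ) (J : Finset (Fin n))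
    (z : Fin n → Bool) : wOneRestriction f J z = wEq n (restrictTo f J z) 1 := by
  have coef_dead {j : Fin n} (hj : j ∉ J) : fcoef n (restrictTo f J z) {j} = 0 := by
    rw [fcoef_restrictTo, filter_false_of_mem, sum_empty]
    intro S _ hSJ
    exact hj (singleton_subset_iff.mp (hSJ ▸ inter_subset_right))
  calc wOneRestriction f J z
      = ∑ j, fcoef n (restrictTo f J z) {j} ^ 2 :=
        sum_subset (subset_univ J) fun j _ hj => by rw [coef_dead hj, sq, mul_zero]
    _ = wEq n (restrictTo f J z) 1 := by
        rw [wEq, univ_filter_card_eq, powersetCard_one, sum_map]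
        rfl

end Restrictions

section RandomSet

variable {α : Type*} [Fintype α] [DecidableEq α]

theorem sum_filter_card_inter_eq {M : Type*} [AddCommMonoid M] (S : Finset α) (k : ℕ)
    (g : Finset α → Finset α → M) :
    ∑ J with #(S ∩ J) = k, g (S ∩ J) (J \ S) =
      ∑ T ∈ powersetCard k S, ∑ B ∈ Sᶜ.powerset, g T B := by
  have parts_union {P : Finset α × Finset α} (hP : P ∈ powersetCard k S ×ˢ Sᶜ.powerset) :
      S ∩ (P.1 ∪ P.2) = P.1 ∧ (P.1 ∪ P.2) \ S = P.2 := by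
    constructor <;> grind [mem_compl]
  rw [← sum_product']
  refine sum_nbij' (fun J => (S ∩ J, J \ S)) (fun P => P.1 ∪ P.2) ?_ ?_ ?_ ?_ fun _ _ => rfl
  · intro J hJ
    simp_all [mem_powersetCard, sdiff_eq_inter_compl]
  · intro P hP
    rw [mem_filter_univ, (parts_union hP).1]
    exact (mem_powersetCard.mp (mem_product.mp hP).1).2
  · grind
  · exact fun P hP => Prod.ext (parts_union hP).1 (parts_union hP).2

variable {R : Type*} [CommSemiring R]

theorem pow_card_mul_pow_card_sub_eq_mul (a b : R) (S J : Finset α) :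
    a ^ #J * b ^ (Fintype.card α - #J) =
      a ^ #(S ∩ J) * b ^ (#S - #(S ∩ J)) * (a ^ #(J \ S) * b ^ (#Sᶜ - #(J \ S))) := by
  have card_alive : #J = #(S ∩ J) + #(J \ S) := by
    rw [inter_comm, card_inter_add_card_sdiff]
  have card_frozen : Fintype.card α - #J = #S - #(S ∩ J) + (#Sᶜ - #(J \ S)) := by
    have inter_le : #(S ∩ J) ≤ #S := card_le_card inter_subset_left
    have sdiff_le : #(J \ S) ≤ #Sᶜ := card_le_card (by simp [sdiff_eq_inter_compl])
    have := card_add_card_compl S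
    omega
  rw [card_frozen, card_alive, pow_add, pow_add, mul_mul_mul_comm]

theorem sum_pow_card_mul_pow_card_sub_of_card_inter_eq (a b : R) (S : Finset α) (k : ℕ) :
    ∑ J with #(S ∩ J) = k, a ^ #J * b ^ (Fintype.card α - #J) =
      (#S).choose k * (a ^ k * b ^ (#S - k)) * (a + b) ^ #Sᶜ := by
  calc ∑ J with #(S ∩ J) = k, a ^ #J * b ^ (Fintype.card α - #J)
      = ∑ T ∈ powersetCard k S, ∑ B ∈ Sᶜ.powerset,
          a ^ #T * b ^ (#S - #T) * (a ^ #B * b ^ (#Sᶜ - #B)) := by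
        simp only [pow_card_mul_pow_card_sub_eq_mul a b S, ← sum_filter_card_inter_eq]
    _ = ∑ _T ∈ powersetCard k S, a ^ k * b ^ (#S - k) * (a + b) ^ #Sᶜ := by
        refine sum_congr rfl fun _ hT => ?_
        rw [← mul_sum, sum_pow_mul_eq_add_pow, (mem_powersetCard.mp hT).2]
    _ = (#S).choose k * (a ^ k * b ^ (#S - k)) * (a + b) ^ #Sᶜ := by
        rw [sum_const, card_powersetCard, nsmul_eq_mul, ← mul_assoc]

end RandomSet

theorem sum_hcExp_wEq_restrictTo {n : ℕ} (f : (Fin n → Bool) → ℝ) (p : ℝ) (k : ℕ) :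
    ∑ J : Finset (Fin n), p ^ #J * (1 - p) ^ (n - #J) *
        hcExp n (fun z => wEq n (restrictTo f J z) k) =
      ∑ S, (#S).choose k * (p ^ k * (1 - p) ^ (#S - k)) * fcoef n f S ^ 2 := by
  simp only [hcExp_wEq_restrictTo, mul_sum]
  rw [sum_comm' (t' := univ) (s' := fun S => univ.filter fun J => #(S ∩ J) = k) (by simp)]
  refine sum_congr rfl fun S _ => ?_
  have law := sum_pow_card_mul_pow_card_sub_of_card_inter_eq p (1 - p) S k
  rw [Fintype.card_fin, add_sub_cancel, one_pow, mul_one] at law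
  rw [← sum_mul, law]

theorem exp_neg_one_le_one_sub_one_div_pow (d : ℕ) :
    Real.exp (-1) ≤ (1 - 1 / (d : ℝ)) ^ (d - 1) := by
  rcases lt_or_ge 1 d with hd | hd
  · obtain ⟨m, rfl, hm⟩ : ∃ m, d = m + 1 ∧ m ≠ 0 := ⟨d - 1, by omega, by omega⟩
    have inv_eq : 1 - 1 / ((m + 1 : ℕ) : ℝ) = (1 + (m : ℝ)⁻¹)⁻¹ := by
      push_cast
      field_simp
      ring
    rw [inv_eq, Real.exp_neg, inv_pow, Nat.add_sub_cancel]
    exact inv_anti₀ (by positivity) Real.one_add_inv_pow_le_exp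
  · rw [Nat.sub_eq_zero_of_le hd, pow_zero]
    exact Real.exp_le_one_iff.mpr (by norm_num)

theorem one_sub_one_div_natCast_nonneg (d : ℕ) : 0 ≤ 1 - 1 / (d : ℝ) := by
  rw [one_div]
  exact sub_nonneg.mpr (Nat.cast_inv_le_one d)

theorem exp_neg_two_le_mul_one_sub_one_div_pow {d k : ℕ} (hdk : d ≤ k) (hkd : k < 2 * d) :
    Real.exp (-2) ≤ k * (1 / (d : ℝ) * (1 - 1 / (d : ℝ)) ^ (k - 1)) := by
  have hd : (0 : ℝ) < d := by exact_mod_cast (by omega : 0 < d)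
  have hq := one_sub_one_div_natCast_nonneg d
  calc Real.exp (-2)
      = Real.exp (-1) ^ 2 := by rw [← Real.exp_nat_mul]; norm_num
    _ ≤ ((1 - 1 / (d : ℝ)) ^ (d - 1)) ^ 2 := by
        gcongr
        exact exp_neg_one_le_one_sub_one_div_pow d
    _ = (1 - 1 / (d : ℝ)) ^ ((d - 1) * 2) := (pow_mul _ _ _).symm
    _ ≤ (1 - 1 / (d : ℝ)) ^ (k - 1) :=
        pow_le_pow_of_le_one hq (sub_le_self 1 (by positivity)) (by omega)
    _ ≤ k / d * (1 - 1 / (d : ℝ)) ^ (k - 1) :=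
        le_mul_of_one_le_left (pow_nonneg hq _) ((one_le_div hd).mpr (by exact_mod_cast hdk))
    _ = k * (1 / (d : ℝ) * (1 - 1 / (d : ℝ)) ^ (k - 1)) := by ring

theorem random_restriction_level_one :
    ∃ c : ℝ, 0 < c ∧ ∀ (n : ℕ) (f : (Fin n → Bool) → ℝ) (d : ℕ), 1 ≤ d →
      (∑ J : Finset (Fin n),
        (1 / (d : ℝ)) ^ J.card * (1 - 1 / (d : ℝ)) ^ (n - J.card) *
          hcExp n (fun z => wOneRestriction f J z)) ≥ c * wApprox n f d := by
  refine ⟨Real.exp (-2), Real.exp_pos _, fun n f d _ => ?_⟩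
  have hq := one_sub_one_div_natCast_nonneg d
  simp only [wOneRestriction_eq_wEq, sum_hcExp_wEq_restrictTo, Nat.choose_one_right, pow_one]
  rw [ge_iff_le, wApprox, mul_sum]
  calc ∑ S with d ≤ #S ∧ #S < 2 * d, Real.exp (-2) * fcoef n f S ^ 2
      ≤ ∑ S with d ≤ #S ∧ #S < 2 * d,
          #S * (1 / (d : ℝ) * (1 - 1 / (d : ℝ)) ^ (#S - 1)) * fcoef n f S ^ 2 := by
        gcongr with S hS
        obtain ⟨hdS, hSd⟩ := (mem_filter.mp hS).2
        exact exp_neg_two_le_mul_one_sub_one_div_pow hdS hSd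
    _ ≤ ∑ S, #S * (1 / (d : ℝ) * (1 - 1 / (d : ℝ)) ^ (#S - 1)) * fcoef n f S ^ 2 :=
        sum_le_sum_of_subset_of_nonneg (filter_subset _ _) fun S _ _ => by positivity

end
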